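/- For every *-periodic kneading sequence ν of exact period n, the associated upper kneading sequence A(ν) has exact period n (i.e., among the two periodic sequences ν₀ and ν₁ obtained from ν by replacing every * by 0 respectively by 1, the one whose internal address contains n has exact period n). -/

import Mathlib

/- Common definitions for formalizing "Admissibility of kneading sequences and
structure of Hubbard trees for quadratic polynomials" by Bruin–Schleicher. -/

namespace HubbardTrees

/-- The symbols `0`, `1`, `*` used for itineraries and kneading sequences. -/
inductive Sym : Type
  | zero : Sym
  | one : Sym
  | star : Sym
deriving DecidableEq

/-- `A` is an arc in `X` joining `x` and `y` (a point if `x = y`, otherwise a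
homeomorphic image of `[0,1]` with endpoints `x` and `y`). -/
def IsArcBetween {X : Type*} [TopologicalSpace X] (A : Set X) (x y : X) : Prop :=
  (x = y ∧ A = {x}) ∨
  (x ≠ y ∧ ∃ γ : Path x y, Topology.IsEmbedding ⇑γ ∧ Set.range ⇑γ = A)

/-- The global arms at `x`: the connected components of `X \ {x}`. -/
def arms {X : Type*} [TopologicalSpace X] (x : X) : Set (Set X) :=
  {C | ∃ y, y ≠ x ∧ C = connectedComponentIn {x}ᶜ y}

/-- The global arm at `x` containing `y` (for `y ≠ x`): the component of `X \ {x}`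
containing `y`.  Local arms at `x` being germs of global arms, we represent the local
arm at `x` pointing towards `y` by this set. -/
def armTo {X : Type*} [TopologicalSpace X] (x y : X) : Set X :=
  connectedComponentIn {x}ᶜ y

/-- `x` is an endpoint: it has exactly one arm. -/
def IsEndpoint {X : Type*} [TopologicalSpace X] (x : X) : Prop :=
  (arms x).ncard = 1

/-- `x` is a branch point: it has at least three arms. -/
def IsBranchPt {X : Type*} [TopologicalSpace X] (x : X) : Prop :=
  3 ≤ (arms x).ncard

/-- `f` maps the set `A` homeomorphically onto its image. -/
def MapsHomeoOn {X : Type*} [TopologicalSpace X] (f : X → X) (A : Set X) : Prop :=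
  Topology.IsEmbedding (A.restrict f)

/-- `f` is a local homeomorphism onto its image at `x`. -/
def IsLocalHomeoAt {X : Type*} [TopologicalSpace X] (f : X → X) (x : X) : Prop :=
  ∃ U : Set X, IsOpen U ∧ x ∈ U ∧ Topology.IsEmbedding (U.restrict f)

/-- `g` sends the local arm at `x` represented by the global arm `C` to the local
arm at `g x` represented by `C'` (germ condition: some initial piece of `C` at `x`
is mapped into `C'`). -/
def MapsLocalArm {X : Type*} [TopologicalSpace X] (g : X → X) (x : X) (C C' : Set X) : Prop :=
  C ∈ arms x ∧ C' ∈ arms (g x) ∧ ∃ U ∈ nhds x, g '' (C ∩ U) ⊆ C'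

/-- `z` is periodic under `f` with exact period `n`. -/
def ExactPeriod {Y : Type*} (f : Y → Y) (z : Y) (n : ℕ) : Prop :=
  1 ≤ n ∧ f^[n] z = z ∧ ∀ k, 1 ≤ k → k < n → f^[k] z ≠ z

/-- The first return map `f^[n]` of the fixed point `z` of `f^[n]` permutes all the
local arms at `z` transitively in a single cycle. -/
def ArmsTransitive {X : Type*} [TopologicalSpace X] (f : X → X) (n : ℕ) (z : X) : Prop :=
  ∀ C ∈ arms z, ∀ C' ∈ arms z, ∃ j : ℕ, MapsLocalArm (f^[n * j]) z C C'

/-- An (abstract) Hubbard tree: a finite topological tree `X` together with a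
continuous surjection `f` and a critical point `c0`, subject to the axioms of
Bruin–Schleicher. -/
structure HubbardTree (X : Type*) [TopologicalSpace X] : Type _ where
  /-- the dynamics -/
  f : X → X
  /-- the critical point -/
  c0 : X
  compact : CompactSpace X
  t2 : T2Space X
  conn : ConnectedSpace X
  /-- the unique arc `[x,y]` joining two points -/
  arc : X → X → Set X
  arc_isArc : ∀ x y : X, IsArcBetween (arc x y) x y
  arc_unique : ∀ (x y : X) (A : Set X), IsArcBetween A x y → A = arc x y
  -- finiteness of the tree
  arms_finite : ∀ x : X, (arms x).Finite
  branch_finite : Set.Finite {x : X | IsBranchPt x}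
  endpoint_finite : Set.Finite {x : X | IsEndpoint x}
  cont : Continuous f
  surj : Function.Surjective f
  /-- every point has at most two inverse images -/
  two_preimages : ∀ y : X, ∃ a b : X, f ⁻¹' {y} ⊆ {a, b}
  /-- local homeomorphism onto its image away from the critical point -/
  local_homeo : ∀ x : X, x ≠ c0 → IsLocalHomeoAt f x
  /-- all endpoints lie on the critical orbit -/
  endpoints_on_orbit : ∀ x : X, IsEndpoint x → ∃ k : ℕ, f^[k] c0 = x
  /-- the critical point is periodic or preperiodic -/
  crit_preperiodic : ∃ k n : ℕ, 1 ≤ n ∧ f^[k + n] c0 = f^[k] c0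
  /-- the critical point is not fixed -/
  crit_not_fixed : f c0 ≠ c0
  /-- expansivity -/
  expansive : ∀ x y : X, x ≠ y →
    (IsBranchPt x ∨ ∃ k : ℕ, f^[k] c0 = x) →
    (IsBranchPt y ∨ ∃ k : ℕ, f^[k] c0 = y) →
    ∃ n : ℕ, c0 ∈ f^[n] '' (arc x y)

namespace HubbardTree

variable {X : Type*} [TopologicalSpace X] (H : HubbardTree X)

/-- The critical value `c₁ = f(c₀)`. -/
def c1 : X := H.f H.c0

/-- The component `T₁` of `T \ {c₀}` containing the critical value. -/
def T1 : Set X := connectedComponentIn {H.c0}ᶜ H.c1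

open Classical in
/-- The symbol (`0`, `1` or `*`) attached to a point of the tree. -/
noncomputable def symOf (x : X) : Sym :=
  if x = H.c0 then Sym.star else if x ∈ H.T1 then Sym.one else Sym.zero

/-- The itinerary of `x`: a sequence of symbols, 1-indexed (the value at index `0`
is irrelevant); entry `k ≥ 1` is the symbol of `f^[k-1] x`. -/
noncomputable def itin (x : X) : ℕ → Sym :=
  fun k => H.symOf (H.f^[k - 1] x)

/-- The kneading sequence: the itinerary of the critical value (1-indexed). -/
noncomputable def kneading : ℕ → Sym := H.itin H.c1

/-- `z` is the characteristic point of its periodic orbit: `c₁` lies in one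
component of `X \ {z}` while `c₀` and all other points of the orbit lie in a
different component. -/
def IsCharacteristic (z : X) : Prop :=
  ∃ Cv Cz : Set X, Cv ∈ arms z ∧ Cz ∈ arms z ∧ Cv ≠ Cz ∧
    H.c1 ∈ Cv ∧ H.c0 ∈ Cz ∧ ∀ k : ℕ, H.f^[k] z ≠ z → H.f^[k] z ∈ Cz

/-- The first return map fixes the local arm at `z` pointing to the critical point
and permutes all other local arms transitively in a single cycle. -/
def OtherArmsTransitive (n : ℕ) (z : X) : Prop :=
  ∀ C ∈ arms z, C ≠ armTo z H.c0 → ∀ C' ∈ arms z, C' ≠ armTo z H.c0 →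
    ∃ j : ℕ, MapsLocalArm (H.f^[n * j]) z C C'

/-- `z` is the characteristic point of an evil periodic orbit of branch points of
exact period `n`. -/
def IsEvilOrbit (z : X) (n : ℕ) : Prop :=
  ExactPeriod H.f z n ∧ (∀ k : ℕ, IsBranchPt (H.f^[k] z)) ∧
    H.IsCharacteristic z ∧ ¬ ArmsTransitive H.f n z

/-- `x` is precritical with `Step(x) = k`: `k ≥ 1` is minimal with `f^[k] x = c₁`. -/
def Step (x : X) (k : ℕ) : Prop :=
  1 ≤ k ∧ H.f^[k] x = H.c1 ∧ ∀ j, 1 ≤ j → j < k → H.f^[j] x ≠ H.c1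

/-- `x` is the closest precritical point `ζ_k`. -/
def IsClosestPrecritical (x : X) (k : ℕ) : Prop :=
  H.Step x k ∧ ∀ j, 1 ≤ j → j < k → H.c1 ∉ H.f^[j] '' (H.arc H.c1 x)

/-- `x` is the earliest precritical point on the set `A`, with `Step(x) = k`:
it is a precritical point on `A` of minimal Step. -/
def IsEarliestPrecriticalOn (A : Set X) (x : X) (k : ℕ) : Prop :=
  x ∈ A ∧ H.Step x k ∧ ∀ y ∈ A, ∀ j : ℕ, H.Step y j → k ≤ j

/-- Marked points: branch points and points of the critical orbit. -/
def MarkedPt (x : X) : Prop :=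
  IsBranchPt x ∨ ∃ k : ℕ, H.f^[k] H.c0 = x

/-- Two marked points are joined by an edge if the arc between them contains no
further marked point. -/
def IsEdge (x y : X) : Prop :=
  H.MarkedPt x ∧ H.MarkedPt y ∧ x ≠ y ∧
    ∀ w ∈ H.arc x y, H.MarkedPt w → w = x ∨ w = y

/-- Equivalence of Hubbard trees: a bijection between the marked points which
conjugates the dynamics and preserves edges. -/
def Equivalent {Y : Type*} [TopologicalSpace Y] (H' : HubbardTree Y) : Prop :=
  ∃ φ : X → Y,
    (∀ x : X, H.MarkedPt x → H'.MarkedPt (φ x)) ∧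
    (∀ x x' : X, H.MarkedPt x → H.MarkedPt x' → φ x = φ x' → x = x') ∧
    (∀ y : Y, H'.MarkedPt y → ∃ x : X, H.MarkedPt x ∧ φ x = y) ∧
    φ H.c0 = H'.c0 ∧
    (∀ x : X, H.MarkedPt x → φ (H.f x) = H'.f (φ x)) ∧
    (∀ x x' : X, H.MarkedPt x → H.MarkedPt x' →
      (H.IsEdge x x' ↔ H'.IsEdge (φ x) (φ x')))

end HubbardTree

/-! ### Combinatorics of kneading sequences -/

/-- The function `ρ_ν(n) = inf { k > n : ν_k ≠ ν_{k-n} } ∈ ℕ ∪ {∞}` (sequences are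
1-indexed). -/
noncomputable def rho (ν : ℕ → Sym) (n : ℕ) : ℕ∞ :=
  sInf {e : ℕ∞ | ∃ j : ℕ, e = (j : ℕ∞) ∧ n < j ∧ ν j ≠ ν (j - n)}

/-- `RhoOrbit ν k m` means that `m` belongs to the `ρ`-orbit
`k → ρ(k) → ρ(ρ(k)) → ⋯` of `k` (stopped before reaching `∞`). -/
inductive RhoOrbit (ν : ℕ → Sym) : ℕ → ℕ → Prop
  | refl (k : ℕ) : RhoOrbit ν k k
  | step {k m j : ℕ} : RhoOrbit ν k m → rho ν m = (j : ℕ∞) → RhoOrbit ν k j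

/-- `m` occurs in the internal address `1 → ρ(1) → ρ(ρ(1)) → ⋯` of `ν`. -/
def InternalAddress (ν : ℕ → Sym) (m : ℕ) : Prop := RhoOrbit ν 1 m

/-- `ν` is a `*`-periodic kneading sequence of (exact) period `n`:
`ν = overline(1 ν₂ … ν_{n-1} *)`. -/
def StarPeriodic (ν : ℕ → Sym) (n : ℕ) : Prop :=
  2 ≤ n ∧ ν 1 = Sym.one ∧ ν n = Sym.star ∧
    (∀ k, 1 ≤ k → ν (k + n) = ν k) ∧
    (∀ k, 1 ≤ k → k < n → ν k ≠ Sym.star)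

/-- `ν` fails the admissibility condition for period `m`. -/
def FailsAdmissibility (ν : ℕ → Sym) (m : ℕ) : Prop :=
  1 ≤ m ∧
  ¬ InternalAddress ν m ∧
  (∀ k : ℕ, k ∣ m → 1 ≤ k → k < m → rho ν k ≤ (m : ℕ∞)) ∧
  ∃ R r : ℕ, rho ν m = (R : ℕ∞) ∧ 1 ≤ r ∧ r ≤ m ∧ r ≡ R [MOD m] ∧ RhoOrbit ν r m

open Classical in
/-- The number `q(m)` of arms predicted by the kneading sequence, where
`ρ(m) = R < ∞` and `r ∈ {1,…,m}` is congruent to `R` modulo `m`. -/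
noncomputable def qArms (ν : ℕ → Sym) (m R r : ℕ) : ℕ :=
  if RhoOrbit ν r m then (R - r) / m + 1 else (R - r) / m + 2


/-! ### Embeddings into the plane and cyclic order of arms -/

/-- Three points in the plane are in (strictly) counterclockwise position. -/
def Ccw (p q r : ℝ × ℝ) : Prop :=
  0 < (q.1 - p.1) * (r.2 - p.2) - (q.2 - p.2) * (r.1 - p.1)

namespace HubbardTree

variable {X : Type*} [TopologicalSpace X] (H : HubbardTree X)

/-- Under an embedding `φ` of the tree into the plane, `p` is a first exit point of
the arm `C` at `x` through the circle of radius `ε` around `φ x`: `p = φ y` for a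
point `y ∈ C` at distance exactly `ε`, such that the arc from `x` to `y` stays
within distance `< ε` before reaching `y`. -/
def ExitPt (φ : X → ℝ × ℝ) (x : X) (C : Set X) (ε : ℝ) (p : ℝ × ℝ) : Prop :=
  ∃ y ∈ C, φ y = p ∧ dist (φ x) p = ε ∧
    ∀ z ∈ H.arc x y, z ≠ y → dist (φ x) (φ z) < ε

/-- The local arms at `x` represented by the arms `C, C', C''` are in
counterclockwise cyclic order under the embedding `φ`. -/
def ArmsCcw (φ : X → ℝ × ℝ) (x : X) (C C' C'' : Set X) : Prop :=
  ∃ ε₀ : ℝ, 0 < ε₀ ∧ ∀ ε : ℝ, 0 < ε → ε < ε₀ →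
    ∀ p p' p'' : ℝ × ℝ, H.ExitPt φ x C ε p → H.ExitPt φ x C' ε p' →
      H.ExitPt φ x C'' ε p'' → Ccw p p' p''

/-- `f` respects the cyclic order (induced by the embedding `φ`) of the local arms
at all branch points. -/
def RespectsCyclicOrder (φ : X → ℝ × ℝ) : Prop :=
  ∀ x : X, IsBranchPt x →
    ∀ C C' C'' : Set X, C ∈ arms x → C' ∈ arms x → C'' ∈ arms x →
      C ≠ C' → C' ≠ C'' → C ≠ C'' → H.ArmsCcw φ x C C' C'' →
      ∀ D D' D'' : Set X, MapsLocalArm H.f x C D → MapsLocalArm H.f x C' D' →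
        MapsLocalArm H.f x C'' D'' → H.ArmsCcw φ (H.f x) D D' D''

/-- The Hubbard tree can be topologically embedded into the plane `ℝ²` so that `f`
respects the cyclic order of the local arms at all branch points. -/
def PlanarEmbeddable : Prop :=
  ∃ φ : X → ℝ × ℝ, Topology.IsEmbedding φ ∧ H.RespectsCyclicOrder φ

end HubbardTree

/-! The critical orbit `c₁, …, c_n = c₀` is the set of marked points of a tree, on which the
sequence alone determines in which direction `c_j` is seen from `c_i`: push the germ of the arc
`[c_i, c_j]` forward until its base point is `c_n` and read off the symbol of its target there.
A finite tree has an endpoint, and the dynamics carries distinct directions at `c_i` to distinct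
directions at `c_{i+1}`, so `c₁` is an endpoint. If the sequence had a period `p < n`, the points
`c_n` and `c_{p+1}` would nevertheless be seen from `c₁` in different directions: the internal
address reaching `n` says that the first direction is not `τ_n`, and the period `p` forces the
second one to be `τ_n`. -/

section Leaf

variable {V α : Type*} {d : V → V → α} {s : Set V}

/-- `i` is an endpoint of the tree spanned by `s`, where `d i j` is the direction in which `j` is
seen from `i`: all other points of `s` are seen in the same direction. The value `d i i` is
ignored. -/
def IsLeaf (d : V → V → α) (s : Set V) (i : V) : Prop :=
  ∀ j ∈ s \ {i}, ∀ k ∈ s \ {i}, d i j = d i k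

/-- The directions `d` on `s` are those of a tree: `i` is not between `j` and `k`, or `j` is not
between `i` and `k`. -/
def IsTreeLike (d : V → V → α) (s : Set V) : Prop :=
  ∀ i ∈ s, ∀ j ∈ s, ∀ k ∈ s, i ≠ j → d i j = d i k ∨ d j i = d j k

/-- The points of `s` that `i` separates from the root `r`. -/
def branchBehind (d : V → V → α) (s : Set V) (r i : V) : Set V :=
  {j ∈ s | j ≠ i ∧ d i j ≠ d i r}

theorem IsTreeLike.branchBehind_ssubset (hd : IsTreeLike d s) {r i j : V} (hr : r ∈ s)
    (hi : i ∈ s) (hj : j ∈ branchBehind d s r i) :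
    branchBehind d s r j ⊂ branchBehind d s r i := by
  obtain ⟨hjs, hji, hdj⟩ := hj
  have toward_root : d j i = d j r := (hd i hi j hjs r hr hji.symm).resolve_left hdj
  refine Set.ssubset_iff_of_subset ?_ |>.2 ⟨j, ⟨hjs, hji, hdj⟩, fun h ↦ h.2.1 rfl⟩
  rintro k ⟨hks, -, hdk⟩
  rw [← toward_root] at hdk
  have same_side : d i j = d i k :=
    (hd i hi j hjs k hks hji.symm).resolve_right (Ne.symm hdk)
  exact ⟨hks, fun h ↦ hdk (h ▸ rfl), same_side ▸ hdj⟩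

theorem IsTreeLike.exists_isLeaf (hd : IsTreeLike d s) (hfin : s.Finite) (hne : s.Nonempty) :
    ∃ i ∈ s, IsLeaf d s i := by
  obtain ⟨r, hr⟩ := hne
  obtain ⟨i, hi, hmin⟩ := hfin.exists_minimalFor (branchBehind d s r) s ⟨r, hr⟩
  have toward_root (j : V) (hj : j ∈ s \ {i}) : d i j = d i r := by
    by_contra hdj
    have hlt := hd.branchBehind_ssubset hr hi ⟨hj.1, hj.2, hdj⟩
    exact hlt.not_subset (hmin hj.1 hlt.subset)
  exact ⟨i, hi, fun j hj k hk ↦ (toward_root j hj).trans (toward_root k hk).symm⟩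

end Leaf

section Direction

variable {α : Type*} [DecidableEq α] {τ : ℕ → α} {n i j : ℕ}

/-- The germ at `c_i` pointing to `c_j` is mapped to the germ at `c_{i+1}` pointing to
`c_{nextTarget τ n i j}`. If `c_i` and `c_j` lie on different sides of the critical point, the
image arc folds at the critical value `c₁`; since `c_n` is the critical point itself, this is also
the case for `j = n`, whatever `τ n` is. -/
def nextTarget (τ : ℕ → α) (n i j : ℕ) : ℕ :=
  if j ≠ n ∧ τ i = τ j then j + 1 else 1

/-- The direction in which `c_j` is seen from `c_i`: push the germ at `c_i` pointing to `c_j`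
forward until it is based at the critical point `c_n`, and take the symbol of its target, which
names a side of the critical point. -/
def direction (τ : ℕ → α) (n i j : ℕ) : α :=
  if i < n then direction τ n (i + 1) (nextTarget τ n i j) else τ j
termination_by n - i

theorem direction_self_left (τ : ℕ → α) (n j : ℕ) : direction τ n n j = τ j := by
  rw [direction, if_neg (lt_irrefl n)]

theorem direction_of_lt (hi : i < n) :
    direction τ n i j = direction τ n (i + 1) (nextTarget τ n i j) := by
  rw [direction, if_pos hi]

theorem direction_of_eq (hi : i < n) (hj : j ≠ n) (h : τ i = τ j) :
    direction τ n i j = direction τ n (i + 1) (j + 1) := by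
  rw [direction_of_lt hi, nextTarget, if_pos ⟨hj, h⟩]

theorem direction_of_ne (hi : i < n) (h : τ i ≠ τ j) :
    direction τ n i j = direction τ n (i + 1) 1 := by
  rw [direction_of_lt hi, nextTarget, if_neg fun H ↦ h H.2]

theorem direction_self_right (hi : i < n) : direction τ n i n = direction τ n (i + 1) 1 := by
  rw [direction_of_lt hi, nextTarget, if_neg fun H ↦ H.1 rfl]

theorem direction_add {l : ℕ} (hi : i + l ≤ n) (hj : j + l ≤ n)
    (h : ∀ e < l, τ (i + e) = τ (j + e)) :
    direction τ n i j = direction τ n (i + l) (j + l) := by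
  induction l with
  | zero => rfl
  | succ l ih =>
    rw [ih (by omega) (by omega) fun e he ↦ h e (by omega),
      direction_of_eq (by omega) (by omega) (h l (by omega)), add_assoc, add_assoc]

theorem direction_self_eq_or_direction_self_eq (τ : ℕ → α) (k : ℕ) (hi : i < n) :
    direction τ n n i = direction τ n n k ∨ direction τ n i n = direction τ n i k := by
  by_cases h : τ i = τ k
  · exact .inl (by rw [direction_self_left, direction_self_left, h])
  · exact .inr (by rw [direction_self_right hi, direction_of_ne hi h])

theorem direction_eq_or_direction_eq (τ : ℕ → α) (n i j k : ℕ) (hi : i ≤ n) (hj : j ≤ n)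
    (hij : i ≠ j) :
    direction τ n i j = direction τ n i k ∨ direction τ n j i = direction τ n j k := by
  induction hm : n - i generalizing i j k with
  | zero =>
    obtain rfl : i = n := by omega
    exact direction_self_eq_or_direction_self_eq τ k (by omega)
  | succ m ih =>
    obtain rfl | hjn := eq_or_lt_of_le hj
    · exact (direction_self_eq_or_direction_self_eq τ k (by omega)).symm
    have hin : i < n := by omega
    by_cases h : τ i = τ j
    · have same_target : nextTarget τ n i k = nextTarget τ n j k := by
        rw [nextTarget, nextTarget, h]
      rw [direction_of_eq hin hjn.ne h, direction_of_eq hjn hin.ne h.symm, direction_of_lt hin,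
        direction_of_lt hjn, same_target]
      exact ih (i + 1) (j + 1) _ hin hjn (by omega) (by omega)
    · by_cases hk : τ i = τ k
      · exact .inr (by rw [direction_of_ne hjn (Ne.symm h), direction_of_ne hjn (hk ▸ Ne.symm h)])
      · exact .inl (by rw [direction_of_ne hin h, direction_of_ne hin hk])

theorem isTreeLike_direction (τ : ℕ → α) (n : ℕ) :
    IsTreeLike (direction τ n) (Set.Icc 1 n) :=
  fun i hi j hj k _ hij ↦ direction_eq_or_direction_eq τ n i j k hi.2 hj.2 hij

theorem nextTarget_mem (hi : i ∈ Set.Ico 1 n) (hj : j ∈ Set.Icc 1 n \ {i}) :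
    nextTarget τ n i j ∈ Set.Icc 1 n \ {i + 1} := by
  simp only [Set.mem_Ico, Set.mem_sdiff, Set.mem_Icc, Set.mem_singleton_iff] at hi hj ⊢
  unfold nextTarget
  split_ifs <;> omega

theorem IsLeaf.of_succ (hi : i ∈ Set.Ico 1 n)
    (h : IsLeaf (direction τ n) (Set.Icc 1 n) (i + 1)) :
    IsLeaf (direction τ n) (Set.Icc 1 n) i := by
  intro j hj k hk
  rw [direction_of_lt hi.2, direction_of_lt hi.2]
  exact h _ (nextTarget_mem hi hj) _ (nextTarget_mem hi hk)

theorem isLeaf_direction_one (τ : ℕ → α) (hn : 1 ≤ n) :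
    IsLeaf (direction τ n) (Set.Icc 1 n) 1 := by
  obtain ⟨i, hi, hleaf⟩ :=
    (isTreeLike_direction τ n).exists_isLeaf (Set.finite_Icc 1 n) (Set.nonempty_Icc.2 hn)
  exact Nat.decreasingInduction' (P := IsLeaf (direction τ n) (Set.Icc 1 n))
    (fun k hki hk h ↦ h.of_succ ⟨hk, hki.trans_le hi.2⟩) hi.1 hleaf

theorem direction_one_succ_eq_of_period {p : ℕ} (hn : ∀ k, 1 ≤ k → τ (k + n) = τ k)
    (hp : ∀ k, 1 ≤ k → τ (k + p) = τ k) (hp1 : 1 ≤ p) (hpn : p < n) :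
    direction τ n 1 (p + 1) = τ n := by
  have period_sub (e : ℕ) (he : 1 ≤ e) : τ (n - p + e) = τ e := by
    rw [← hp _ (by omega), ← hn e he]
    congr 1
    omega
  calc direction τ n 1 (p + 1)
      = direction τ n (1 + (n - p - 1)) (p + 1 + (n - p - 1)) :=
        direction_add (by omega) (by omega) fun e _ ↦ by
          rw [← hp (1 + e) (by omega)]
          congr 1
          omega
    _ = direction τ n (n - p) n := by congr 1 <;> omega
    _ = direction τ n (n - p + 1) 1 := direction_self_right (by omega)
    _ = direction τ n (n - p + 1 + (p - 1)) (1 + (p - 1)) :=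
        direction_add (by omega) (by omega) fun e _ ↦ by
          rw [add_assoc, period_sub _ (by omega)]
    _ = direction τ n n p := by congr 1 <;> omega
    _ = τ n := by rw [direction_self_left, ← hn p hp1, add_comm, hp n (by omega)]

end Direction

section InternalAddress

variable {τ : ℕ → Sym} {n m j : ℕ}

theorem isLeast_of_rho_eq (h : rho τ m = (j : ℕ∞)) :
    IsLeast {k : ℕ | m < k ∧ τ k ≠ τ (k - m)} j := by
  have hne : {e : ℕ∞ | ∃ k : ℕ, e = (k : ℕ∞) ∧ m < k ∧ τ k ≠ τ (k - m)}.Nonempty := by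
    by_contra hempty
    rw [rho, Set.not_nonempty_iff_eq_empty.1 hempty, sInf_empty] at h
    exact ENat.top_ne_natCast j h
  obtain ⟨k, hk, hmem⟩ := csInf_mem hne
  obtain rfl : j = k := by exact_mod_cast h.symm.trans hk
  refine ⟨hmem, fun i hi ↦ ?_⟩
  have hle : rho τ m ≤ (i : ℕ∞) := sInf_le ⟨i, rfl, hi⟩
  exact_mod_cast h ▸ hle

theorem direction_succ_one_of_rho_eq (hjn : j ≤ n) (h : rho τ m = (j : ℕ∞)) :
    direction τ n (m + 1) 1 = direction τ n j (j - m) := by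
  obtain ⟨⟨hmj, -⟩, hmin⟩ := isLeast_of_rho_eq h
  have agree (e : ℕ) (he : e < j - m - 1) : τ (m + 1 + e) = τ (1 + e) := by
    by_contra hne
    have := hmin ⟨(by omega : m < m + 1 + e), by rwa [show m + 1 + e - m = 1 + e by omega]⟩
    omega
  rw [direction_add (by omega) (by omega) agree]
  congr 1 <;> omega

theorem InternalAddress.direction_succ_one (h : InternalAddress τ m) (hmn : m < n) :
    direction τ n (m + 1) 1 = direction τ n 2 1 := by
  unfold InternalAddress at h
  induction h with
  | refl => rfl
  | step _ hrho ih =>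
    obtain ⟨hmj, hne⟩ := (isLeast_of_rho_eq hrho).1
    rw [← ih (by omega), direction_succ_one_of_rho_eq hmn.le hrho, direction_of_ne hmn hne]

theorem InternalAddress.direction_two_one_ne (h : InternalAddress τ n) (hn : n ≠ 1) :
    direction τ n 2 1 ≠ τ n := by
  cases h with
  | refl => exact absurd rfl hn
  | step hm hrho =>
    obtain ⟨hmn, hne⟩ := (isLeast_of_rho_eq hrho).1
    rw [← InternalAddress.direction_succ_one hm hmn, direction_succ_one_of_rho_eq le_rfl hrho,
      direction_self_left]
    exact hne.symm

end InternalAddress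

theorem periodic_of_replace_star {ν τ : ℕ → Sym} {n : ℕ} {a : Sym}
    (hν : ∀ k, 1 ≤ k → ν (k + n) = ν k)
    (hτ : ∀ k, 1 ≤ k → (ν k = Sym.star ∧ τ k = a) ∨ (ν k ≠ Sym.star ∧ τ k = ν k))
    (k : ℕ) (hk : 1 ≤ k) : τ (k + n) = τ k := by
  have hkn := hτ (k + n) (by omega)
  rw [hν k hk] at hkn
  rcases hτ k hk with ⟨hs, h⟩ | ⟨hs, h⟩ <;> simp_all

theorem exact_period_of_upper_kneading_sequence_general {τ : ℕ → Sym} {n : ℕ}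
    (hper : ∀ k, 1 ≤ k → τ (k + n) = τ k) (hn : InternalAddress τ n)
    (p : ℕ) (hp1 : 1 ≤ p) (hp : ∀ k, 1 ≤ k → τ (k + p) = τ k) : n ≤ p := by
  by_contra! hpn
  refine hn.direction_two_one_ne (by omega) ?_
  calc direction τ n 2 1
      = direction τ n 1 n := (direction_self_right (by omega)).symm
    _ = direction τ n 1 (p + 1) :=
        isLeaf_direction_one τ (by omega) n ⟨⟨by omega, le_rfl⟩, (by omega : n ≠ 1)⟩ (p + 1)
          ⟨⟨by omega, hpn⟩, (by omega : p + 1 ≠ 1)⟩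
    _ = τ n := direction_one_succ_eq_of_period hper hp hp1 hpn

/-- Proposition 5.19, "Exact Period of Kneading Sequence".
For every `*`-periodic kneading sequence `ν` of exact period `n`, the associated
upper kneading sequence `A(ν)` has exact period `n`: among the two sequences
obtained from `ν` by replacing every `*` consistently by `0` or by `1`, the one
whose internal address contains `n` has exact period `n`. -/
theorem exact_period_of_upper_kneading_sequence
    (ν : ℕ → Sym) (n : ℕ) (hν : StarPeriodic ν n) :
    ∀ τ : ℕ → Sym,
      ((∀ k : ℕ, 1 ≤ k →
          ((ν k = Sym.star ∧ τ k = Sym.zero) ∨ (ν k ≠ Sym.star ∧ τ k = ν k))) ∨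
       (∀ k : ℕ, 1 ≤ k →
          ((ν k = Sym.star ∧ τ k = Sym.one) ∨ (ν k ≠ Sym.star ∧ τ k = ν k)))) →
      InternalAddress τ n →
      ((∀ k : ℕ, 1 ≤ k → τ (k + n) = τ k) ∧
        ∀ p : ℕ, 1 ≤ p → (∀ k : ℕ, 1 ≤ k → τ (k + p) = τ k) → n ≤ p) := by
  intro τ hτ hn
  have hper := hτ.elim (periodic_of_replace_star hν.2.2.2.1) (periodic_of_replace_star hν.2.2.2.1)
  exact ⟨hper, exact_period_of_upper_kneading_sequence_general hper hn⟩

end HubbardTrees
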